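/- Let μ be a continuous linear form on C^r(𝒪_F,J',(d_σ)_{σ∈S∖J'}). Then there exists a constant C_μ ∈ ℝ_{≥0} such that for every a ∈ 𝒪_F, every n ∈ ℤ_{≥0} and every multi-index i ∈ Y' one has |μ( z ↦ 1_{a+ϖ_F^n𝒪_F}(z)·((z−a)/ϖ_F^n)^i )| ≤ C_μ · q^{nr}. -/

import Mathlib

/-!
Setting (cf. the paper's notations): `O` plays the role of the ring of integers `𝒪_F` of a
finite extension `F` of `ℚ_p`, `E` is the coefficient field (a finite extension of `ℚ_p`
with its p-adic absolute value, normalized by `|x| = p^{-val_F(x)}`, `val_F(p) = [F:ℚ_p]`),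
`S` is the (finite) set of `ℚ_p`-algebra embeddings `F ↪ E`, restricted here to `O`,
`ν : O → ℝ` is the absolute value on `O` (the common restriction of the norm of `E` along any
embedding), `ϖ` is a fixed uniformizer with `ν ϖ = q⁻¹` where `q = p^f` is the cardinality
of the residue field, and `u * ϖ ^ e = p` records the ramification index `e`.
-/

open scoped Classical

noncomputable section

namespace CrPaper

structure Setting (S O E : Type*) [Fintype S] [CommRing O] [NormedField E] where
  q : ℝ
  p : ℕ
  fdeg : ℕ
  hp : p.Prime
  hfdeg : 0 < fdeg
  hq : q = (p : ℝ) ^ fdeg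
  emb : S → O →+* E
  emb_inj : ∀ s, Function.Injective (emb s)
  emb_distinct : Function.Injective emb
  ν : O → ℝ
  norm_emb : ∀ (s) (z : O), ‖emb s z‖ = ν z
  norm_le_one : ∀ (s) (z : O), ‖emb s z‖ ≤ 1
  norm_add_max : ∀ x y : E, ‖x + y‖ ≤ max ‖x‖ ‖y‖
  ϖ : O
  ν_ϖ : ν ϖ = q⁻¹
  mem_ball_iff : ∀ (y : O) (n : ℕ), (∃ z, y = ϖ ^ n * z) ↔ ν y ≤ q⁻¹ ^ n
  ram : ∃ (e : ℕ) (u : O), 0 < e ∧ IsUnit u ∧ u * ϖ ^ e = (p : O)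

variable {S O E : Type*} [Fintype S] [DecidableEq S] [CommRing O] [IsDomain O]
  [NormedField E] [CompleteSpace E] [CharZero E]

/-- The total weight `|i| = ∑ i_σ` of a multi-index. -/
def wt (i : S → ℕ) : ℕ := ∑ s, i s

/-- `i! = ∏ i_σ!` for a multi-index. -/
def mfact (i : S → ℕ) : ℕ := ∏ s, (i s).factorial

/-- The (finite) set `I_{≤N}` of multi-indices of total weight `≤ N`. -/
def Idx (S : Type*) [Fintype S] [DecidableEq S] (N : ℕ) : Finset (S → ℕ) :=
  (Fintype.piFinset fun _ : S => Finset.range (N + 1)).filter fun i => wt i ≤ N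

/-- `z^i = ∏_σ σ(z)^{i_σ}`. -/
def mpow (St : Setting S O E) (z : O) (i : S → ℕ) : E := ∏ s, St.emb s z ^ i s

/-- The Taylor remainder `ε_{f,N}(x,y) = f(x+y) − ∑_{|i|≤N} D_i f(x) y^i / i!`. -/
def epsTay (St : Setting S O E) (N : ℕ) (f : O → E) (D : (S → ℕ) → O → E) (x y : O) : E :=
  f (x + y) - ∑ i ∈ Idx S N, D i x * mpow St y i / (mfact i : E)

/-- `f` is of class `C^r` with the family of bounded functions `D` witnessing the
definition: all `D_i` (`|i| ≤ ⌊r⌋`) are bounded and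
`C_{f,r}(h) = sup_{x ∈ O, y ∈ ϖ^h O} |ε_{f,⌊r⌋}(x,y)| q^{rh} → 0` as `h → ∞`. -/
def IsCrWith (St : Setting S O E) (r : ℝ) (f : O → E) (D : (S → ℕ) → O → E) : Prop :=
  (∀ i ∈ Idx S ⌊r⌋₊, ∃ C : ℝ, ∀ x : O, ‖D i x‖ ≤ C) ∧
  ∀ ε : ℝ, 0 < ε → ∃ M : ℕ, ∀ h : ℕ, M ≤ h → ∀ x z : O,
    ‖epsTay St ⌊r⌋₊ f D x (St.ϖ ^ h * z)‖ * St.q ^ (r * (h : ℝ)) ≤ ε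

/-- `f` is of class `C^r`. -/
def IsCr (St : Setting S O E) (r : ℝ) (f : O → E) : Prop :=
  ∃ D, IsCrWith St r f D

/-- The `C^r`-norm of `f` (relative to the — unique — family `D`):
`max( sup_{i,x} |D_i f(x)/i!| , sup_{x,y} |ε_{f,⌊r⌋}(x,y)|/|y|^r )`. -/
def CrNorm (St : Setting S O E) (r : ℝ) (f : O → E) (D : (S → ℕ) → O → E) : ℝ :=
  max (⨆ i : (Idx S ⌊r⌋₊), ⨆ x : O, ‖D i.1 x / (mfact i.1 : E)‖)
      (⨆ x : O, ⨆ y : O, ‖epsTay St ⌊r⌋₊ f D x y‖ / St.ν y ^ r)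

/-- The function `z ↦ 1_{a+ϖ^n O}(z) ((z−a)/ϖ^n)^i` : it takes the value `y^i` at
`z = a + ϖ^n y` and `0` outside the coset `a + ϖ^n O`. -/
def coeval (St : Setting S O E) (a : O) (n : ℕ) (i : S → ℕ) : O → E := fun z =>
  if hz : ∃ y : O, z = a + St.ϖ ^ n * y then mpow St hz.choose i else 0

/-- `J' = J ∪ {σ ∈ S∖J : d_σ + 1 > r}`. -/
def Jp (J : Set S) (d : S → ℕ) (r : ℝ) : Set S := J ∪ {s | r < (d s : ℝ) + 1}

theorem q_gt_one (St : Setting S O E) : 1 < St.q := by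
  rw [St.hq]
  exact one_lt_pow₀ (by exact_mod_cast St.hp.one_lt) St.hfdeg.ne'

theorem ultra (St : Setting S O E) : IsUltrametricDist E :=
  IsUltrametricDist.isUltrametricDist_of_forall_norm_add_le_max_norm St.norm_add_max

theorem norm_pi (St : Setting S O E) (s : S) : ‖St.emb s St.ϖ‖ = St.q⁻¹ := by
  rw [St.norm_emb, St.ν_ϖ]

theorem emb_pi_ne (St : Setting S O E) (s : S) : St.emb s St.ϖ ≠ 0 := by
  have h := norm_pi St s
  have hq := q_gt_one St
  intro h0
  rw [h0, norm_zero] at h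
  have : (0:ℝ) < St.q⁻¹ := by positivity
  linarith

theorem norm_mpow (St : Setting S O E) (y : O) (j : S → ℕ) :
    ‖mpow St y j‖ = St.ν y ^ wt j := by
  simp only [mpow, wt, norm_prod, norm_pow, St.norm_emb]
  rw [Finset.prod_pow_eq_pow_sum]

theorem mem_Idx (N : ℕ) (j : S → ℕ) : j ∈ Idx S N ↔ wt j ≤ N := by
  simp only [Idx, Finset.mem_filter, Fintype.mem_piFinset, Finset.mem_range]
  refine ⟨fun h => h.2, fun h => ⟨fun s => ?_, h⟩⟩
  have : j s ≤ wt j := Finset.single_le_sum (f := j) (fun _ _ => Nat.zero_le _) (Finset.mem_univ s)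
  omega

theorem mfact_ne (j : S → ℕ) : (mfact j : E) ≠ 0 := by
  have : mfact j ≠ 0 := Finset.prod_ne_zero_iff.mpr fun s _ => Nat.factorial_ne_zero _
  exact_mod_cast this

/-- The multinomial term `∏ binom(i,j) v^{i-j}`. -/
def bterm (St : Setting S O E) (i j : S → ℕ) (v : O) : E :=
  ∏ s, ((i s).choose (j s) : E) * St.emb s v ^ (i s - j s)

theorem norm_bterm_le (St : Setting S O E) (i j : S → ℕ) (v : O) : ‖bterm St i j v‖ ≤ 1 := by
  have := ultra St
  rw [bterm, norm_prod]
  refine Finset.prod_le_one (fun _ _ => norm_nonneg _) fun s _ => ?_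
  rw [norm_mul, norm_pow]
  exact mul_le_one₀ (IsUltrametricDist.norm_natCast_le_one E _) (by positivity)
    (pow_le_one₀ (norm_nonneg _) (St.norm_le_one s v))

theorem mpow_add (St : Setting S O E) (i : S → ℕ) (v w : O) :
    mpow St (v + w) i =
      ∑ j ∈ Fintype.piFinset (fun s => Finset.range (i s + 1)), bterm St i j v * mpow St w j := by
  have h : ∀ s, St.emb s (v + w) ^ i s = ∑ k ∈ Finset.range (i s + 1),
      (((i s).choose k : E) * St.emb s v ^ (i s - k)) * St.emb s w ^ k := by
    intro s
    rw [map_add, add_comm, add_pow]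
    exact Finset.sum_congr rfl fun k _ => by ring
  simp only [mpow, bterm, h]
  rw [Finset.prod_univ_sum]
  exact Finset.sum_congr rfl fun j _ => by rw [Finset.prod_mul_distrib]

theorem bterm_zero (St : Setting S O E) (i j : S → ℕ) (v : O) (s : S) (h : i s < j s) :
    bterm St i j v = 0 := by
  rw [bterm]
  exact Finset.prod_eq_zero (Finset.mem_univ s) (by simp [Nat.choose_eq_zero_of_lt h])

/-- remainder of the multinomial expansion -/
theorem norm_rem_le (St : Setting S O E) (N : ℕ) (i : S → ℕ) (v w : O) (B : ℝ) (hB : 0 ≤ B)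
    (h : ∀ s : S, St.ν w ^ (N + 1) ≤ B) :
    ‖mpow St (v + w) i - ∑ j ∈ Idx S N, bterm St i j v * mpow St w j‖ ≤ B := by
  have := ultra St
  set P := Fintype.piFinset (fun s => Finset.range (i s + 1)) with hP
  have h1 : ∑ j ∈ Idx S N, bterm St i j v * mpow St w j
      = ∑ j ∈ P with wt j ≤ N, bterm St i j v * mpow St w j := by
    symm
    apply Finset.sum_subset
    · intro j hj
      rw [mem_Idx]
      exact (Finset.mem_filter.mp hj).2
    · intro j hj hj'
      have hj2 : j ∉ P := fun hjP => hj' (Finset.mem_filter.mpr ⟨hjP, (mem_Idx N j).mp hj⟩)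
      simp only [hP, Fintype.mem_piFinset, Finset.mem_range, not_forall] at hj2
      obtain ⟨s, hs⟩ := hj2
      rw [bterm_zero St i j v s (by omega), zero_mul]
  rw [mpow_add, h1, ← Finset.sum_filter_add_sum_filter_not P (fun j => wt j ≤ N),
    add_sub_cancel_left]
  apply IsUltrametricDist.norm_sum_le_of_forall_le_of_nonneg hB
  intro j hj
  have hj2 : N + 1 ≤ wt j := by
    have := (Finset.mem_filter.mp hj).2
    omega
  have hS : ∃ s : S, True := by
    by_contra hc
    push Not at hc
    have : wt j = 0 := Finset.sum_eq_zero fun s _ => (hc s).elim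
    omega
  obtain ⟨s, -⟩ := hS
  have hν0 : 0 ≤ St.ν w := by rw [← St.norm_emb s]; positivity
  have hν1 : St.ν w ≤ 1 := by rw [← St.norm_emb s]; exact St.norm_le_one s w
  rw [norm_mul, norm_mpow]
  calc _ ≤ 1 * St.ν w ^ wt j := by gcongr; exact norm_bterm_le St i j v
    _ ≤ St.ν w ^ (N + 1) := by rw [one_mul]; exact pow_le_pow_of_le_one hν0 hν1 hj2
    _ ≤ B := h s

/-- normalized derivatives `D_j f / j!` of `coeval` -/
def Dq (St : Setting S O E) (a : O) (n : ℕ) (i j : S → ℕ) (x : O) : E :=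
  if hz : ∃ y : O, x = a + St.ϖ ^ n * y then bterm St i j hz.choose / mpow St (St.ϖ ^ n) j else 0

theorem emb_cancel (St : Setting S O E) (a : O) (n : ℕ) {v v' : O}
    (h : a + St.ϖ ^ n * v = a + St.ϖ ^ n * v') (s : S) : St.emb s v = St.emb s v' := by
  have h2 := congrArg (St.emb s) (add_left_cancel h)
  rw [map_mul, map_mul, map_pow] at h2
  exact mul_left_cancel₀ (pow_ne_zero _ (emb_pi_ne St s)) h2

theorem coeval_in (St : Setting S O E) (a : O) (n : ℕ) (i : S → ℕ) (v : O) :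
    coeval St a n i (a + St.ϖ ^ n * v) = mpow St v i := by
  have hz : ∃ y : O, a + St.ϖ ^ n * v = a + St.ϖ ^ n * y := ⟨v, rfl⟩
  rw [coeval, dif_pos hz, mpow, mpow]
  exact Finset.prod_congr rfl fun s _ => by rw [emb_cancel St a n hz.choose_spec s]

theorem Dq_in (St : Setting S O E) (a : O) (n : ℕ) (i j : S → ℕ) (v : O) :
    Dq St a n i j (a + St.ϖ ^ n * v) = bterm St i j v / mpow St (St.ϖ ^ n) j := by
  have hz : ∃ y : O, a + St.ϖ ^ n * v = a + St.ϖ ^ n * y := ⟨v, rfl⟩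
  rw [Dq, dif_pos hz, bterm, bterm]
  congr 1
  exact Finset.prod_congr rfl fun s _ => by rw [emb_cancel St a n hz.choose_spec s]

theorem mpow_mul (St : Setting S O E) (x y : O) (j : S → ℕ) :
    mpow St (x * y) j = mpow St x j * mpow St y j := by
  simp [mpow, mul_pow, Finset.prod_mul_distrib]

theorem mpow_pi_ne (St : Setting S O E) (n : ℕ) (j : S → ℕ) : mpow St (St.ϖ ^ n) j ≠ 0 := by
  refine Finset.prod_ne_zero_iff.mpr fun s _ => pow_ne_zero _ ?_
  rw [map_pow]
  exact pow_ne_zero _ (emb_pi_ne St s)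

theorem norm_mpow_pi (St : Setting S O E) (n : ℕ) (j : S → ℕ) :
    ‖mpow St (St.ϖ ^ n) j‖ = ((St.q ^ n) ^ wt j)⁻¹ := by
  simp only [mpow, wt, norm_prod, norm_pow, map_pow, norm_pi]
  rw [Finset.prod_pow_eq_pow_sum, inv_pow, inv_pow]

theorem norm_Dq_le (St : Setting S O E) (a : O) (n : ℕ) (i j : S → ℕ) (x : O) :
    ‖Dq St a n i j x‖ ≤ (St.q ^ n) ^ wt j := by
  have hq := q_gt_one St
  by_cases hx : ∃ v, x = a + St.ϖ ^ n * v
  · obtain ⟨v, rfl⟩ := hx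
    rw [Dq_in, norm_div, norm_mpow_pi, div_inv_eq_mul]
    exact mul_le_of_le_one_left (by positivity) (norm_bterm_le St i j v)
  · rw [Dq, dif_neg hx, norm_zero]
    positivity

theorem norm_coeval_le (St : Setting S O E) (a : O) (n : ℕ) (i : S → ℕ) (x : O) :
    ‖coeval St a n i x‖ ≤ 1 := by
  by_cases hx : ∃ v, x = a + St.ϖ ^ n * v
  · obtain ⟨v, rfl⟩ := hx
    rw [coeval_in, mpow, norm_prod]
    refine Finset.prod_le_one (fun _ _ => norm_nonneg _) fun s _ => ?_
    rw [norm_pow]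
    exact pow_le_one₀ (norm_nonneg _) (St.norm_le_one s v)
  · rw [coeval, dif_neg hx, norm_zero]
    exact zero_le_one

/-- The derivatives of `coeval`. -/
def Dc (St : Setting S O E) (a : O) (n : ℕ) (i j : S → ℕ) (x : O) : E :=
  (mfact j : E) * Dq St a n i j x

theorem eps_eq (St : Setting S O E) (N : ℕ) (a : O) (n : ℕ) (i : S → ℕ) (x y : O) :
    epsTay St N (coeval St a n i) (Dc St a n i) x y =
      coeval St a n i (x + y) - ∑ j ∈ Idx S N, Dq St a n i j x * mpow St y j := by
  rw [epsTay]
  congr 1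
  refine Finset.sum_congr rfl fun j _ => ?_
  have := mfact_ne (E := E) j
  rw [Dc]
  field_simp

theorem eps_in (St : Setting S O E) (N : ℕ) (a : O) (n : ℕ) (i : S → ℕ) (x w : O)
    (B : ℝ) (hB : 0 ≤ B) (h : ∀ s : S, St.ν w ^ (N + 1) ≤ B) :
    ‖epsTay St N (coeval St a n i) (Dc St a n i) x (St.ϖ ^ n * w)‖ ≤ B := by
  rw [eps_eq]
  by_cases hx : ∃ v, x = a + St.ϖ ^ n * v
  · obtain ⟨v, rfl⟩ := hx
    rw [add_assoc, ← mul_add, coeval_in]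
    convert norm_rem_le St N i v w B hB h using 4 with j hj
    rw [Dq_in, mpow_mul]
    have := mpow_pi_ne St n j
    field_simp
  · have h2 : ¬ ∃ v, x + St.ϖ ^ n * w = a + St.ϖ ^ n * v := by
      rintro ⟨v, hv⟩
      exact hx ⟨v - w, by linear_combination hv⟩
    rw [coeval, dif_neg h2, Finset.sum_eq_zero, sub_zero, norm_zero]
    · exact hB
    · intro j _
      rw [Dq, dif_neg hx, zero_mul]

theorem nu_mul (St : Setting S O E) (s : S) (x y : O) : St.ν (x * y) = St.ν x * St.ν y := by
  simp only [← St.norm_emb s, map_mul, norm_mul]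

theorem nu_pi_pow (St : Setting S O E) (s : S) (n : ℕ) : St.ν (St.ϖ ^ n) = (St.q ^ n)⁻¹ := by
  rw [← St.norm_emb s, map_pow, norm_pow, norm_pi, inv_pow]

theorem nu_nonneg (St : Setting S O E) (s : S) (y : O) : 0 ≤ St.ν y := by
  rw [← St.norm_emb s]; positivity

theorem nu_le_one (St : Setting S O E) (s : S) (y : O) : St.ν y ≤ 1 := by
  rw [← St.norm_emb s]; exact St.norm_le_one s y

theorem pow_le_rpow_of_floor {r : ℝ} (hr : 0 ≤ r) {b : ℝ} (hb : 1 ≤ b) {k : ℕ} (hk : k ≤ ⌊r⌋₊) :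
    b ^ k ≤ b ^ r := by
  rw [← Real.rpow_natCast]
  exact Real.rpow_le_rpow_of_exponent_le hb ((Nat.le_floor_iff hr).mp hk)

theorem eps_div_le (St : Setting S O E) (r : ℝ) (hr : 0 ≤ r) (a : O) (n : ℕ) (i : S → ℕ)
    (x y : O) :
    ‖epsTay St ⌊r⌋₊ (coeval St a n i) (Dc St a n i) x y‖ / St.ν y ^ r ≤ (St.q ^ n) ^ r := by
  have := ultra St
  have hq := q_gt_one St
  have hqn : 1 ≤ St.q ^ n := one_le_pow₀ hq.le
  by_cases hy : ∃ w, y = St.ϖ ^ n * w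
  · obtain ⟨w, rfl⟩ := hy
    by_cases hS : Nonempty S
    · obtain ⟨s⟩ := hS
      have hw0 := nu_nonneg St s w
      have hw1 := nu_le_one St s w
      have e : (St.q ^ n) ^ r * St.ν (St.ϖ ^ n * w) ^ r = St.ν w ^ r := by
        rw [← Real.mul_rpow (by positivity) (nu_nonneg St s _), nu_mul St s, nu_pi_pow St s,
          mul_inv_cancel_left₀ (by positivity)]
      apply div_le_of_le_mul₀ (Real.rpow_nonneg (nu_nonneg St s _) _) (by positivity)
      rw [e]
      refine eps_in St _ a n i x w _ (by positivity) fun _ => ?_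
      rcases hw0.eq_or_lt with h0 | h0
      · rw [← h0, zero_pow (by omega)]
        positivity
      · rw [← Real.rpow_natCast]
        apply Real.rpow_le_rpow_of_exponent_ge h0 hw1
        push_cast
        exact (Nat.lt_floor_add_one r).le
    · have h0 : ‖epsTay St ⌊r⌋₊ (coeval St a n i) (Dc St a n i) x (St.ϖ ^ n * w)‖ = 0 :=
        le_antisymm (eps_in St _ a n i x w 0 le_rfl fun s => (hS ⟨s⟩).elim) (norm_nonneg _)
      rw [h0, zero_div]
      positivity
  · rw [St.mem_ball_iff, not_le, inv_pow] at hy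
    have hν : 0 < St.ν y := lt_trans (by positivity) hy
    have hb : 1 ≤ St.q ^ n * St.ν y := by
      have := (inv_lt_iff_one_lt_mul₀ (by positivity)).mp hy
      linarith [mul_comm (St.q ^ n) (St.ν y)]
    rw [div_le_iff₀ (by positivity), ← Real.mul_rpow (by positivity) hν.le, eps_eq]
    have hB : 1 ≤ (St.q ^ n * St.ν y) ^ r := Real.one_le_rpow hb hr
    rw [sub_eq_add_neg]
    refine (St.norm_add_max _ _).trans (max_le ((norm_coeval_le St a n i _).trans hB) ?_)
    rw [norm_neg]
    apply IsUltrametricDist.norm_sum_le_of_forall_le_of_nonneg (by linarith)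
    intro j hj
    rw [norm_mul, norm_mpow]
    calc _ ≤ (St.q ^ n) ^ wt j * St.ν y ^ wt j := by gcongr; exact norm_Dq_le St a n i j x
      _ = (St.q ^ n * St.ν y) ^ wt j := (mul_pow _ _ _).symm
      _ ≤ _ := pow_le_rpow_of_floor hr hb ((mem_Idx _ _).mp hj)

theorem isCrWith_coeval (St : Setting S O E) (r : ℝ) (a : O) (n : ℕ) (i : S → ℕ) :
    IsCrWith St r (coeval St a n i) (Dc St a n i) := by
  have hq := q_gt_one St
  have hq0 : 0 < St.q := by linarith
  constructor
  · intro j _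
    refine ⟨‖(mfact j : E)‖ * (St.q ^ n) ^ wt j, fun x => ?_⟩
    rw [Dc, norm_mul]
    gcongr
    exact norm_Dq_le St a n i j x
  · intro ε hε
    set N := ⌊r⌋₊
    have hc : r - (N + 1) < 0 := by
      have := Nat.lt_floor_add_one r
      linarith
    have hlt : St.q ^ (r - (N + 1)) < 1 := Real.rpow_lt_one_of_one_lt_of_neg hq hc
    have hT : Filter.Tendsto (fun h : ℕ => (St.q ^ n) ^ (N + 1) * (St.q ^ (r - (N + 1))) ^ h)
        Filter.atTop (nhds 0) := by
      simpa using (tendsto_pow_atTop_nhds_zero_of_lt_one (by positivity) hlt).const_mul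
        ((St.q ^ n) ^ (N + 1))
    obtain ⟨M, hM⟩ := Filter.eventually_atTop.mp (hT.eventually (gt_mem_nhds hε))
    refine ⟨max M n, fun h hh x z => ?_⟩
    have h1 := hM h (le_trans (le_max_left _ _) hh)
    obtain ⟨k, rfl⟩ := Nat.exists_eq_add_of_le (le_trans (le_max_right _ _) hh)
    rw [pow_add, mul_assoc]
    have hle : ‖epsTay St N (coeval St a n i) (Dc St a n i) x (St.ϖ ^ n * (St.ϖ ^ k * z))‖
        ≤ ((St.q ^ k)⁻¹) ^ (N + 1) := by
      refine eps_in St _ a n i x _ _ (by positivity) fun s => ?_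
      have := nu_nonneg St s (St.ϖ ^ k * z)
      gcongr
      rw [nu_mul St s, nu_pi_pow St s]
      exact mul_le_of_le_one_right (by positivity) (nu_le_one St s z)
    calc _ ≤ ((St.q ^ k)⁻¹) ^ (N + 1) * St.q ^ (r * ((n + k : ℕ) : ℝ)) := by gcongr
      _ = (St.q ^ n) ^ (N + 1) * (St.q ^ (r - (N + 1))) ^ (n + k) := by
        simp only [← Real.rpow_natCast, ← Real.rpow_neg hq0.le, ← Real.rpow_mul hq0.le,
          ← Real.rpow_add hq0]
        congr 1
        push_cast
        ring
      _ ≤ ε := h1.le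

theorem CrNorm_coeval_le (St : Setting S O E) (r : ℝ) (hr : 0 ≤ r) (a : O) (n : ℕ) (i : S → ℕ) :
    CrNorm St r (coeval St a n i) (Dc St a n i) ≤ (St.q ^ n) ^ r := by
  have hq := q_gt_one St
  have hqn : 1 ≤ St.q ^ n := one_le_pow₀ hq.le
  have h0 : 0 ≤ (St.q ^ n) ^ r := by positivity
  refine max_le (Real.iSup_le (fun j => Real.iSup_le (fun x => ?_) h0) h0)
    (Real.iSup_le (fun x => Real.iSup_le (fun y => eps_div_le St r hr a n i x y) h0) h0)
  rw [Dc, mul_div_cancel_left₀ _ (mfact_ne j.1)]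
  exact (norm_Dq_le St a n i j.1 x).trans
    (pow_le_rpow_of_floor hr hqn ((mem_Idx _ _).mp j.2))

/-- if `μ` is a continuous linear form on `C^r(O, J', (d_σ)_{σ∈S∖J'})`, then
there is `C_μ ≥ 0` with `|∫_{a+ϖ^n O} ((z−a)/ϖ^n)^i μ(z)| ≤ C_μ q^{nr}` for all `a`, `n` and
all `i ∈ Y'`. -/
theorem statement17 (St : Setting S O E) (J : Set S) (d : S → ℕ)
    (r : ℝ) (hr : 0 ≤ r) (μ : (O → E) →ₗ[E] E)
    (hcont : ∃ K : ℝ, 0 ≤ K ∧ ∀ (f : O → E) (D : (S → ℕ) → O → E),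
      IsCrWith St r f D → (∀ s ∉ Jp J d r, D (Pi.single s (d s + 1)) = 0) →
      ‖μ f‖ ≤ K * CrNorm St r f D) :
    ∃ C : ℝ, 0 ≤ C ∧ ∀ (a : O) (n : ℕ) (i : S → ℕ),
      (∀ s ∉ Jp J d r, i s ≤ d s) →
      ‖μ (coeval St a n i)‖ ≤ C * St.q ^ ((n : ℝ) * r) := by
  obtain ⟨K, hK, h⟩ := hcont
  refine ⟨K, hK, fun a n i hi => ?_⟩
  have hq := q_gt_one St
  refine (h _ (Dc St a n i) (isCrWith_coeval St r a n i) fun s hs => ?_).trans ?_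
  · funext x
    have hlt : i s < (Pi.single s (d s + 1) : S → ℕ) s := by
      rw [Pi.single_eq_same]
      exact Nat.lt_succ_of_le (hi s hs)
    by_cases hx : ∃ v, x = a + St.ϖ ^ n * v
    · obtain ⟨v, rfl⟩ := hx
      rw [Dc, Dq_in, bterm_zero St i _ v s hlt]
      simp
    · rw [Dc, Dq, dif_neg hx]
      simp
  · rw [Real.rpow_mul (by linarith), Real.rpow_natCast]
    exact mul_le_mul_of_nonneg_left (CrNorm_coeval_le St r hr a n i) hK

end CrPaper
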